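/- Let (X,r) be a non-degenerate set-theoretical YBE solution. Then for every a ∈ X there exist unique elements x, y, l ∈ X such that r(a,x) = (l,x) and r(y,a) = (y,l). -/

import Mathlib

/-!
Write `r (x, y) = (u, v)`. The outer components of the braid relation say `σ_x σ_y = σ_u σ_v` and
`γ_y γ_x = γ_v γ_u`. Hence if `r` fixes one coordinate, i.e. `r (a, x) = (l, x)` or
`r (y, a) = (y, l)`, then cancellation gives `σ_a = σ_l` and `γ_a = γ_l`. The same applies to
`r⁻¹`, which is again a non-degenerate solution (`NDYBE.symm`).

*Existence of `x`.* Let `σ_a x₀ = a` and `r (a, x₀) = (a, x)`. Then `γ_x = γ_{x₀}`, so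
`γ_x a = γ_{x₀} a = x`, i.e. `r (a, x) = (l, x)` with `l = σ_a x`. The construction of `y` is the
mirror image.

*Uniqueness of `x`.* If `r (a, x) = (l, x)`, then `r⁻¹ (l, x) = (a, x)`, so `τ_a = τ_l` and
`r⁻¹ (a, x) = (τ_l x, z) = (a, z)` for some `z`. Thus `r (a, z) = (a, x)`, which determines `z`
from `a` and then `x` from `z`. Likewise for `y`.

*The two values of `l` agree.* If `r (a, x) = (l, x)` and `r (y, a) = (y, l')`, the middle component
of the braid relation at `(y, a, x)` gives `σ_{l'} x = l'` because `γ_l = γ_a` and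
`σ_{l'} = σ_a`; but `σ_{l'} x = σ_a x = l`.
-/

/-- The map `X × X → X × X` given by `(x, y) ↦ (σ_x(y), γ_y(x))`. -/
def rmap {X : Type*} (σ γ : X → X → X) : X × X → X × X :=
  fun p => (σ p.1 p.2, γ p.2 p.1)

/-- `r × id : X × X × X → X × X × X`, applying `r` to the first two factors. -/
def lift12 {X : Type*} (r : X × X → X × X) : X × X × X → X × X × X :=
  fun p => ((r (p.1, p.2.1)).1, (r (p.1, p.2.1)).2, p.2.2)

/-- `id × r : X × X × X → X × X × X`, applying `r` to the last two factors. -/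
def lift23 {X : Type*} (r : X × X → X × X) : X × X × X → X × X × X :=
  fun p => (p.1, r (p.2.1, p.2.2))

/-- A non-degenerate set-theoretical solution `(X, r)` of the Yang–Baxter equation:
`r (x, y) = (σ_x(y), γ_y(x))` is a bijection with inverse `r⁻¹ (x, y) = (τ_x(y), ρ_y(x))`,
`r` satisfies the braid relation, and all the maps `σ_x, γ_y, τ_x, ρ_y` are bijections. -/
structure NDYBE (X : Type*) where
  σ : X → X → X
  γ : X → X → X
  τ : X → X → X
  ρ : X → X → X
  braid : lift23 (rmap σ γ) ∘ lift12 (rmap σ γ) ∘ lift23 (rmap σ γ)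
        = lift12 (rmap σ γ) ∘ lift23 (rmap σ γ) ∘ lift12 (rmap σ γ)
  inv_left : ∀ p : X × X, rmap τ ρ (rmap σ γ p) = p
  inv_right : ∀ p : X × X, rmap σ γ (rmap τ ρ p) = p
  σ_bij : ∀ x : X, Function.Bijective (σ x)
  γ_bij : ∀ y : X, Function.Bijective (γ y)
  τ_bij : ∀ x : X, Function.Bijective (τ x)
  ρ_bij : ∀ y : X, Function.Bijective (ρ y)

namespace NDYBE

variable {X : Type*} (S : NDYBE X)

theorem σ_comp (x y z : X) : S.σ x (S.σ y z) = S.σ (S.σ x y) (S.σ (S.γ y x) z) :=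
  congrArg Prod.fst (congrFun S.braid (x, y, z))

theorem middle (x y z : X) :
    S.σ (S.γ (S.σ y z) x) (S.γ z y) = S.γ (S.σ (S.γ y x) z) (S.σ x y) :=
  congrArg (fun p => p.2.1) (congrFun S.braid (x, y, z))

theorem γ_comp (x y z : X) : S.γ (S.γ z y) (S.γ (S.σ y z) x) = S.γ z (S.γ y x) :=
  congrArg (fun p => p.2.2) (congrFun S.braid (x, y, z))

/-- The inverse solution `(X, r⁻¹)`. -/
def symm : NDYBE X where
  σ := S.τ
  γ := S.ρ
  τ := S.σ
  ρ := S.γ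
  braid := by
    have f' : ∀ p, lift23 (rmap S.τ S.ρ) (lift23 (rmap S.σ S.γ) p) = p := fun p => by
      simp [lift23, S.inv_left]
    have g' : ∀ p, lift12 (rmap S.τ S.ρ) (lift12 (rmap S.σ S.γ) p) = p := fun p => by
      simp [lift12, S.inv_left]
    have f : ∀ p, lift23 (rmap S.σ S.γ) (lift23 (rmap S.τ S.ρ) p) = p := fun p => by
      simp [lift23, S.inv_right]
    have g : ∀ p, lift12 (rmap S.σ S.γ) (lift12 (rmap S.τ S.ρ) p) = p := fun p => by
      simp [lift12, S.inv_right]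
    funext p
    -- Every `p` is the image of some `q` under the braid composite, which both sides invert.
    obtain ⟨q, rfl⟩ : ∃ q, lift23 (rmap S.σ S.γ)
        (lift12 (rmap S.σ S.γ) (lift23 (rmap S.σ S.γ) q)) = p :=
      ⟨lift23 (rmap S.τ S.ρ) (lift12 (rmap S.τ S.ρ) (lift23 (rmap S.τ S.ρ) p)), by
        rw [f, g, f]⟩
    have hb := congrFun S.braid q
    simp only [Function.comp_apply] at hb ⊢
    rw [f', g', f', hb, g', f', g']
  inv_left := S.inv_right
  inv_right := S.inv_left
  σ_bij := S.τ_bij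
  γ_bij := S.ρ_bij
  τ_bij := S.σ_bij
  ρ_bij := S.γ_bij

variable {S}

theorem rmap_eq {x y u v : X} :
    rmap S.σ S.γ (x, y) = (u, v) ↔ S.σ x y = u ∧ S.γ y x = v :=
  Prod.mk_inj

theorem inv_eq {x y u v : X} (h : rmap S.σ S.γ (x, y) = (u, v)) :
    rmap S.symm.σ S.symm.γ (u, v) = (x, y) := by
  rw [← h]; exact S.inv_left _

theorem σ_eq_of_snd_fixed {a x l : X} (h : rmap S.σ S.γ (a, x) = (l, x)) :
    S.σ a = S.σ l := by
  obtain ⟨h1, h2⟩ := rmap_eq.1 h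
  funext t
  obtain ⟨s, rfl⟩ := (S.σ_bij x).2 t
  rw [S.σ_comp, h1, h2]

theorem γ_eq_of_snd_fixed {a x l : X} (h : rmap S.σ S.γ (a, x) = (l, x)) :
    S.γ a = S.γ l := by
  obtain ⟨h1, h2⟩ := rmap_eq.1 h
  funext t
  apply (S.γ_bij x).1
  rw [← S.γ_comp, h1, h2]

theorem σ_eq_of_fst_fixed {a y l : X} (h : rmap S.σ S.γ (y, a) = (y, l)) :
    S.σ a = S.σ l := by
  obtain ⟨h1, h2⟩ := rmap_eq.1 h
  funext t
  apply (S.σ_bij y).1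
  rw [S.σ_comp, h1, h2]

theorem γ_eq_of_fst_fixed {a y l : X} (h : rmap S.σ S.γ (y, a) = (y, l)) :
    S.γ a = S.γ l := by
  obtain ⟨h1, h2⟩ := rmap_eq.1 h
  funext t
  obtain ⟨s, rfl⟩ := (S.γ_bij y).2 t
  rw [← S.γ_comp, h1, h2]

theorem exists_snd_fixed (S : NDYBE X) (a : X) :
    ∃ x l, rmap S.σ S.γ (a, x) = (l, x) := by
  obtain ⟨x₀, h₀⟩ := (S.σ_bij a).2 a
  have h : S.γ x₀ = S.γ (S.γ x₀ a) := γ_eq_of_fst_fixed (rmap_eq.2 ⟨h₀, rfl⟩)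
  exact ⟨S.γ x₀ a, _, rmap_eq.2 ⟨rfl, (congrFun h a).symm⟩⟩

theorem exists_fst_fixed (S : NDYBE X) (a : X) :
    ∃ y l, rmap S.σ S.γ (y, a) = (y, l) := by
  obtain ⟨y₀, h₀⟩ := (S.γ_bij a).2 a
  have h : S.σ y₀ = S.σ (S.σ y₀ a) := σ_eq_of_snd_fixed (rmap_eq.2 ⟨rfl, h₀⟩)
  exact ⟨S.σ y₀ a, _, rmap_eq.2 ⟨(congrFun h a).symm, rfl⟩⟩

/-- An `x` with `r (a, x) = (l, x)` satisfies `r (a, z) = (a, x)` for some `z`; this pins down `x`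
in terms of `a`. -/
theorem exists_preimage_of_snd_fixed {a x l : X} (h : rmap S.σ S.γ (a, x) = (l, x)) :
    ∃ z, S.σ a z = a ∧ S.γ z a = x := by
  have h' := inv_eq h
  have hτ := σ_eq_of_snd_fixed h'
  have h1 : S.symm.σ a x = a := by rw [← hτ]; exact (rmap_eq.1 h').1
  exact ⟨_, rmap_eq.1 (inv_eq (S := S.symm) (rmap_eq.2 ⟨h1, rfl⟩))⟩

/-- A `y` with `r (y, a) = (y, l)` satisfies `r (z, a) = (y, a)` for some `z`; this pins down `y`
in terms of `a`. -/
theorem exists_preimage_of_fst_fixed {a y l : X} (h : rmap S.σ S.γ (y, a) = (y, l)) :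
    ∃ z, S.σ z a = y ∧ S.γ a z = a := by
  have h' := inv_eq h
  have hρ := γ_eq_of_fst_fixed h'
  have h1 : S.symm.γ a y = a := by rw [← hρ]; exact (rmap_eq.1 h').2
  exact ⟨_, rmap_eq.1 (inv_eq (S := S.symm) (rmap_eq.2 ⟨rfl, h1⟩))⟩

theorem snd_fixed_unique {a x x' l l' : X} (h : rmap S.σ S.γ (a, x) = (l, x))
    (h' : rmap S.σ S.γ (a, x') = (l', x')) : x = x' := by
  obtain ⟨z, h1, rfl⟩ := exists_preimage_of_snd_fixed h
  obtain ⟨z', h1', rfl⟩ := exists_preimage_of_snd_fixed h'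
  rw [(S.σ_bij a).1 (h1.trans h1'.symm)]

theorem fst_fixed_unique {a y y' l l' : X} (h : rmap S.σ S.γ (y, a) = (y, l))
    (h' : rmap S.σ S.γ (y', a) = (y', l')) : y = y' := by
  obtain ⟨z, rfl, h1⟩ := exists_preimage_of_fst_fixed h
  obtain ⟨z', rfl, h1'⟩ := exists_preimage_of_fst_fixed h'
  rw [(S.γ_bij a).1 (h1.trans h1'.symm)]

theorem l_eq {a x y l l' : X} (h : rmap S.σ S.γ (a, x) = (l, x))
    (h' : rmap S.σ S.γ (y, a) = (y, l')) : l = l' := by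
  have hγ := γ_eq_of_snd_fixed h
  have hσ := σ_eq_of_fst_fixed h'
  obtain ⟨h1, h2⟩ := rmap_eq.1 h
  obtain ⟨h1', h2'⟩ := rmap_eq.1 h'
  have hm := S.middle y a x
  rwa [h1, h2, h1', h2', ← hσ, h1, ← hγ, h2', ← hσ, h1] at hm

end NDYBE

/-- for a non-degenerate set-theoretical YBE solution `(X, r)`,
for every `a ∈ X` there exist unique `x, y, l ∈ X` such that `r(a, x) = (l, x)`
and `r(y, a) = (y, l)`. -/
theorem NDYBE.exists_unique_l_triple {X : Type*} (S : NDYBE X) :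
    ∀ a : X, ∃! t : X × X × X,
      rmap S.σ S.γ (a, t.1) = (t.2.2, t.1) ∧
      rmap S.σ S.γ (t.2.1, a) = (t.2.1, t.2.2) := by
  intro a
  obtain ⟨x, l, hx⟩ := S.exists_snd_fixed a
  obtain ⟨y, l', hy⟩ := S.exists_fst_fixed a
  obtain rfl := l_eq hx hy
  refine ⟨(x, y, l), ⟨hx, hy⟩, ?_⟩
  rintro ⟨x', y', m⟩ ⟨hx', hy'⟩
  obtain rfl := snd_fixed_unique hx hx'
  obtain rfl := fst_fixed_unique hy hy'
  obtain rfl := l_eq hx' hy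
  rfl
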